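/- arXiv:1312.7510 — 2 statements merged into one kernel-verified Lean document; each statement's English description precedes it below -/
import Mathlib

section
/- The two interpolations have the same limit: let U ⊂ Ω be open, ε_k → 0, and y_k : 𝓛_{ε_k}(U) → ℝᵈ a sequence of lattice deformations whose number of broken cells satisfies #C̄'_{ε_k} ≤ C ε_k^{−d+1} for a constant C independent of k. Then for every interaction direction ν ∈ 𝒱, the difference ỹ_k − ȳ_{ν,k} of the simplicial interpolation and the ν-directional interpolation converges to 0 in measure as ε_k → 0. -/
open scoped BigOperators ENNReal Pointwise
open MeasureTheory Filter Set

attribute [local instance] Classical.propDecidable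

noncomputable section

namespace Cleavage

/-- `ℝ^{d × 2^d}`: matrices whose columns are indexed by the corner bit-vectors of a cell. -/
abbrev CellMat (d : ℕ) := Fin d → (Fin d → Bool) → ℝ

/-- Euclidean norm on `ℝ^n`. -/
def eunorm {n : ℕ} (v : Fin n → ℝ) : ℝ := Real.sqrt (∑ i, v i ^ 2)

/-- Frobenius (Euclidean) norm on `ℝ^{d×2^d}`. -/
def mnorm {d : ℕ} (G : CellMat d) : ℝ := Real.sqrt (∑ j, ∑ b, G j b ^ 2)

/-- corner of the reference cube `[-1/2,1/2)^d` indexed by a bit-vector. -/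
def cornerVec {d : ℕ} (b : Fin d → Bool) : Fin d → ℝ := fun i => if b i then 1 / 2 else -(1 / 2)

/-- the matrix `Z` whose columns are the corners `z_i = A·(±1/2,…,±1/2)` of the reference cell. -/
def Zmat (d : ℕ) (A : Matrix (Fin d) (Fin d) ℝ) : CellMat d := fun j b => A.mulVec (cornerVec b) j

/-- `R ∈ SO(d)`. -/
def IsSO {d : ℕ} (R : Matrix (Fin d) (Fin d) ℝ) : Prop := R.transpose * R = 1 ∧ R.det = 1

/-- the product `R G` of a `d×d` matrix with an element of `ℝ^{d×2^d}`. -/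
def rotCell {d : ℕ} (R : Matrix (Fin d) (Fin d) ℝ) (G : CellMat d) : CellMat d :=
  fun j b => ∑ i, R j i * G i b

/-- `F · Z`. -/
def matZ (d : ℕ) (A F : Matrix (Fin d) (Fin d) ℝ) : CellMat d := rotCell F (Zmat d A)

/-- the translation `(c,…,c)`. -/
def transCell {d : ℕ} (c : Fin d → ℝ) : CellMat d := fun j _ => c j

/-- `SO̅(d) = { R Z : R ∈ SO(d) }`. -/
def SObar (d : ℕ) (A : Matrix (Fin d) (Fin d) ℝ) : Set (CellMat d) :=
  {G | ∃ R : Matrix (Fin d) (Fin d) ℝ, IsSO R ∧ G = rotCell R (Zmat d A)}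

/-- Euclidean distance of `G` to `SO̅(d)`. -/
def distSObar (d : ℕ) (A : Matrix (Fin d) (Fin d) ℝ) (G : CellMat d) : ℝ :=
  sInf {t | ∃ H ∈ SObar d A, t = mnorm (G - H)}

/-- `G ⊥ V₀`, i.e. the columns of `G` sum to zero. -/
def PerpTrans {d : ℕ} (G : CellMat d) : Prop := ∀ j, ∑ b, G j b = 0

/-- Frobenius inner product. -/
def frobInner {d : ℕ} (G H : CellMat d) : ℝ := ∑ j, ∑ b, G j b * H j b

/-- the quadratic form `Q_cell(G) = D²W_cell(Z)[G,G]`. -/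
def Qcell (d : ℕ) (A : Matrix (Fin d) (Fin d) ℝ) (W : CellMat d → ℝ) (G : CellMat d) : ℝ :=
  iteratedFDeriv ℝ 2 W (Zmat d A) ![G, G]

/-- Assumption (i): frame indifference. -/
def FrameIndiff (d : ℕ) (W : CellMat d → ℝ) : Prop :=
  ∀ (G : CellMat d) (R : Matrix (Fin d) (Fin d) ℝ) (c : Fin d → ℝ),
    IsSO R → W (rotCell R G + transCell c) = W G

/-- Assumption (ii): the zero set of the energy. -/
def MinimalOnSO (d : ℕ) (A : Matrix (Fin d) (Fin d) ℝ) (W : CellMat d → ℝ) : Prop :=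
  ∀ G : CellMat d, W G = 0 ↔ ∃ R : Matrix (Fin d) (Fin d) ℝ, IsSO R ∧
    ∃ c : Fin d → ℝ, G = rotCell R (Zmat d A) + transCell c

/-- Assumption (iii), smoothness part: `W` continuous and `C²` near `SO̅(d)`. -/
def SmoothNearSO (d : ℕ) (A : Matrix (Fin d) (Fin d) ℝ) (W : CellMat d → ℝ) : Prop :=
  Continuous W ∧ ∃ U : Set (CellMat d), IsOpen U ∧ SObar d A ⊆ U ∧ ContDiffOn ℝ 2 W U

/-- Assumption (iii), positivity part: `Q_cell` positive definite orthogonally to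
translations and infinitesimal rotations. -/
def HessPosDef (d : ℕ) (A : Matrix (Fin d) (Fin d) ℝ) (W : CellMat d → ℝ) : Prop :=
  ∀ G : CellMat d, G ≠ 0 → (∀ c : Fin d → ℝ, frobInner G (transCell c) = 0) →
    (∀ H : Matrix (Fin d) (Fin d) ℝ, H.transpose = -H → frobInner G (rotCell H (Zmat d A)) = 0) →
    0 < Qcell d A W G

/-- a partition `𝒵 = 𝒵₁ ∪̇ … ∪̇ 𝒵ₙ` of the corners. -/
def IsCellPartition {d n : ℕ} (P : Fin n → Finset (Fin d → Bool)) : Prop :=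
  (∀ i, (P i).Nonempty) ∧ (∀ i j, i ≠ j → Disjoint (P i) (P j)) ∧
    Finset.univ.biUnion P = Finset.univ

/-- `(1/2) Σ_{i≠j} Σ_{z_s ∈ 𝒵ᵢ} Σ_{z_t ∈ 𝒵ⱼ} β(z_s,z_t)`. -/
def crossSum {d n : ℕ} (β : (Fin d → Bool) → (Fin d → Bool) → ℝ)
    (P : Fin n → Finset (Fin d → Bool)) : ℝ :=
  (1 / 2) * ∑ i, ∑ j, if i = j then 0 else ∑ s ∈ P i, ∑ t ∈ P j, β s t

/-- `M ≤ d(G;𝒵ᵢ,𝒵ⱼ)` for all `i ≠ j`. -/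
def Separated {d n : ℕ} (M : ℝ) (P : Fin n → Finset (Fin d → Bool)) (G : CellMat d) : Prop :=
  ∀ i j, i ≠ j → ∀ s ∈ P i, ∀ t ∈ P j, M ≤ eunorm (fun jj => G jj s - G jj t)

/-- `G[𝒵ᵢ]`. -/
def restrictCols {d n : ℕ} (P : Fin n → Finset (Fin d → Bool)) (G : CellMat d) (i : Fin n) :
    {b // b ∈ P i} → Fin d → ℝ := fun b jj => G jj b.1

/-- Assumption (iv): decomposition into pair interactions at large separation,
with the compatibility condition near `SO̅(d)`. -/
def PairDecomposition (d : ℕ) (A : Matrix (Fin d) (Fin d) ℝ) (W : CellMat d → ℝ)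
    (β : (Fin d → Bool) → (Fin d → Bool) → ℝ) : Prop :=
  ∀ (n : ℕ), 2 ≤ n → ∀ P : Fin n → Finset (Fin d → Bool), IsCellPartition P →
    ∃ Wc : (i : Fin n) → ({b // b ∈ P i} → Fin d → ℝ) → ℝ,
      (∀ i v, 0 ≤ Wc i v) ∧
      (∀ δ : ℝ, 0 < δ → ∃ M : ℝ, ∀ G : CellMat d, Separated M P G →
        |W G - ((∑ i, Wc i (restrictCols P G i)) + crossSum β P)| ≤ δ) ∧
      (∃ C, 0 < C ∧ ∃ U : Set (CellMat d), IsOpen U ∧ SObar d A ⊆ U ∧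
        ∀ H ∈ U, ∀ i, Wc i (restrictCols P H i) ≤ C * W H)

/-- the triple sum of assumption (iv) is strictly positive unless `n = 1`. -/
def CrossPos (d : ℕ) (β : (Fin d → Bool) → (Fin d → Bool) → ℝ) : Prop :=
  ∀ (n : ℕ), 2 ≤ n → ∀ P : Fin n → Finset (Fin d → Bool), IsCellPartition P → 0 < crossSum β P

def dotp {n : ℕ} (v w : Fin n → ℝ) : ℝ := ∑ i, v i * w i

/-- the set of interaction directions `𝒱 = A{-1,0,1}^d \ {0}`. -/
def Vfin (d : ℕ) (A : Matrix (Fin d) (Fin d) ℝ) : Finset (Fin d → ℝ) :=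
  ((Finset.univ : Finset (Fin d → Fin 3)).image fun t =>
    A.mulVec fun i => ((t i : ℕ) : ℝ) - 1).erase 0

/-- `(1/2) β(z_s,z_t) = 2^{k-d} β(ν)` whenever `z_s - z_t = ν`, `ν` having `k` non-zero entries. -/
def BetaNuCompat (d : ℕ) (A : Matrix (Fin d) (Fin d) ℝ)
    (β : (Fin d → Bool) → (Fin d → Bool) → ℝ) (βν : (Fin d → ℝ) → ℝ) : Prop :=
  ∀ s t : Fin d → Bool, s ≠ t →
    (1 / 2) * β s t =
      (2 : ℝ) ^ ((((Finset.univ.filter fun i => s i ≠ t i)).card : ℤ) - (d : ℤ)) *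
        βν (A.mulVec fun i => cornerVec s i - cornerVec t i)

/-- `β_A = min_{ξ ≠ 0} Σ_ν β(ν)|ν·ξ| / |e₁·ξ|`. -/
def betaA (d : ℕ) [NeZero d] (A : Matrix (Fin d) (Fin d) ℝ) (βν : (Fin d → ℝ) → ℝ) : ℝ :=
  sInf {q | ∃ ξ : Fin d → ℝ, ξ ≠ 0 ∧ ξ 0 ≠ 0 ∧
    q = (∑ ν ∈ Vfin d A, βν ν * |dotp ν ξ|) / |ξ 0|}

/-- `α_A`, characterized as the minimal value `Q̃(1)` of the reduced minimization problem. -/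
def alphaA (d : ℕ) [NeZero d] (A : Matrix (Fin d) (Fin d) ℝ) (W : CellMat d → ℝ) : ℝ :=
  sInf {q | ∃ G : Matrix (Fin d) (Fin d) ℝ, G 0 0 = 1 ∧
    q = Qcell d A W (matZ d A ((1 / 2 : ℝ) • (G + G.transpose)))}

def M1 (d : ℕ) (A : Matrix (Fin d) (Fin d) ℝ) (βν : (Fin d → ℝ) → ℝ) : ℝ :=
  sInf {m | ∃ ξ : Fin d → ℝ, eunorm ξ = 1 ∧ m = ∑ ν ∈ Vfin d A, βν ν * |dotp ν ξ|}

def M2 (d : ℕ) (A : Matrix (Fin d) (Fin d) ℝ) (βν : (Fin d → ℝ) → ℝ) : ℝ :=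
  sSup {m | ∃ ξ : Fin d → ℝ, eunorm ξ = 1 ∧ m = ∑ ν ∈ Vfin d A, βν ν * |dotp ν ξ|}

/-! lattice geometry: the (translated) lattice `ε(ρ + A(k + u))`. -/

def latPt (d : ℕ) (A : Matrix (Fin d) (Fin d) ℝ) (ε : ℝ) (rv : Fin d → ℝ) (k : Fin d → ℤ)
    (u : Fin d → ℝ) : Fin d → ℝ :=
  ε • A.mulVec fun i => rv i + (k i : ℝ) + u i

def cellCorner (d : ℕ) (A : Matrix (Fin d) (Fin d) ℝ) (ε : ℝ) (rv : Fin d → ℝ) (k : Fin d → ℤ)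
    (b : Fin d → Bool) : Fin d → ℝ :=
  latPt d A ε rv k fun i => if b i then 1 else 0

/-- the discrete gradient `∇̄y = ε⁻¹(y₁ - ȳ, …, y_{2^d} - ȳ)` on the cell with index `k`. -/
def dgrad (d : ℕ) (A : Matrix (Fin d) (Fin d) ℝ) (ε : ℝ) (rv : Fin d → ℝ)
    (y : (Fin d → ℝ) → Fin d → ℝ) (k : Fin d → ℤ) : CellMat d :=
  fun j b =>
    (y (cellCorner d A ε rv k b) j -
      (∑ b' : Fin d → Bool, y (cellCorner d A ε rv k b') j) / 2 ^ d) / ε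

/-- the piecewise affine interpolation on the reference cube `[0,1]^n`, obtained inductively
over face dimension through the barycenters of the faces.  On each simplex of the associated
barycentric decomposition it is the affine interpolation of the corner/barycenter values; it is
computed here radially from the barycenter. -/
def cubeInterp : (n : ℕ) → ((Fin n → Bool) → ℝ) → (Fin n → ℝ) → ℝ
  | 0, f, _ => f fun i => i.elim0
  | n + 1, f, x =>
    let c : ℝ := (∑ b : Fin (n + 1) → Bool, f b) / 2 ^ (n + 1)
    have h : ∃ i : Fin (n + 1), ∀ j : Fin (n + 1), |x j - 1 / 2| ≤ |x i - 1 / 2| :=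
      Finite.exists_max fun i => |x i - 1 / 2|
    let i0 := Classical.choose h
    let t := 2 * |x i0 - 1 / 2|
    if t = 0 then c
    else
      (1 - t) * c +
        t * cubeInterp n (fun bb => f (i0.insertNth (if (1 : ℝ) / 2 < x i0 then true else false) bb))
          (fun j => 1 / 2 + (x (i0.succAbove j) - 1 / 2) / t)

/-- the index of the lattice cell containing `x`. -/
def cellIndex (d : ℕ) (A : Matrix (Fin d) (Fin d) ℝ) (ε : ℝ) (rv : Fin d → ℝ)
    (x : Fin d → ℝ) : Fin d → ℤ :=
  fun i => ⌊(ε • A)⁻¹.mulVec x i - rv i⌋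

/-- the reference coordinate (in `[0,1)^d`) of `x` inside its cell. -/
def refCoord (d : ℕ) (A : Matrix (Fin d) (Fin d) ℝ) (ε : ℝ) (rv : Fin d → ℝ)
    (x : Fin d → ℝ) : Fin d → ℝ :=
  fun i => (ε • A)⁻¹.mulVec x i - rv i - (cellIndex d A ε rv x i : ℝ)

/-- a cell is intact if `diam{∇̄y, 𝒵} ≤ C_int`. -/
def IntactCell (d : ℕ) (A : Matrix (Fin d) (Fin d) ℝ) (ε : ℝ) (rv : Fin d → ℝ) (Cint : ℝ)
    (y : (Fin d → ℝ) → Fin d → ℝ) (k : Fin d → ℤ) : Prop :=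
  ∀ b b' : Fin d → Bool,
    eunorm (fun jj => y (cellCorner d A ε rv k b) jj - y (cellCorner d A ε rv k b') jj) ≤ Cint * ε

/-- the interpolation `ỹ`: the simplicial interpolation on intact cells; on broken cells,
componentwise the simplicial interpolation where `diam_i ≤ C_int` and the affine fallback
`ỹ^i(x) = y^i(z₁) + (x - z₁)_i` otherwise. -/
def tildey (d : ℕ) (A : Matrix (Fin d) (Fin d) ℝ) (ε : ℝ) (rv : Fin d → ℝ) (Cint : ℝ)
    (y : (Fin d → ℝ) → Fin d → ℝ) (x : Fin d → ℝ) : Fin d → ℝ := fun j =>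
  let k := cellIndex d A ε rv x
  if IntactCell d A ε rv Cint y k then
    cubeInterp d (fun b => y (cellCorner d A ε rv k b) j) (refCoord d A ε rv x)
  else if ∀ b b' : Fin d → Bool,
      |y (cellCorner d A ε rv k b) j - y (cellCorner d A ε rv k b') j| ≤ Cint * ε then
    cubeInterp d (fun b => y (cellCorner d A ε rv k b) j) (refCoord d A ε rv x)
  else
    y (cellCorner d A ε rv k fun _ => false) j + (x j - cellCorner d A ε rv k (fun _ => false) j)

/-- the mesoscopic exponent `s = (3d-1)/(3d)`. -/
def sExp (d : ℕ) : ℝ := (3 * d - 1) / (3 * d)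


/-! the mesoscopic cell `U_ε = (0,ℓ) × (0,w)^{d-1}` and its energies. -/

def Ubox (d : ℕ) [NeZero d] (ℓ w : ℝ) : Set (Fin d → ℝ) :=
  {x | x 0 ∈ Ioo 0 ℓ ∧ ∀ i : Fin d, i ≠ 0 → x i ∈ Ioo 0 w}

/-- inner cells: the closure of the cell is contained in `U_ε`. -/
def InnerCellM (d : ℕ) [NeZero d] (A : Matrix (Fin d) (Fin d) ℝ) (ε : ℝ) (rv : Fin d → ℝ)
    (ℓ w : ℝ) (k : Fin d → ℤ) : Prop :=
  ∀ u : Fin d → ℝ, (∀ i, u i ∈ Icc (0 : ℝ) 1) → latPt d A ε rv k u ∈ Ubox d ℓ w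

def tailCoords (d : ℕ) (x : Fin d → ℝ) : Fin (d - 1) → ℝ := fun i => x ⟨i.1 + 1, by omega⟩

def consd (d : ℕ) [NeZero d] (a : ℝ) (x' : Fin (d - 1) → ℝ) : Fin d → ℝ :=
  fun j => if h : (j : ℕ) = 0 then a else x' ⟨(j : ℕ) - 1, by omega⟩

/-- the boundary faces `{0,ℓ} × w·Ws`. -/
def FaceSet (d : ℕ) [NeZero d] (ℓ w : ℝ) (Ws : Set (Fin (d - 1) → ℝ)) : Set (Fin d → ℝ) :=
  {x | (x 0 = 0 ∨ x 0 = ℓ) ∧ tailCoords d x ∈ w • Ws}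

/-- cells whose closure meets the boundary faces `{0,ℓ} × w·Ws`. -/
def BoundaryCellM (d : ℕ) [NeZero d] (A : Matrix (Fin d) (Fin d) ℝ) (ε : ℝ) (rv : Fin d → ℝ)
    (ℓ w : ℝ) (Ws : Set (Fin (d - 1) → ℝ)) (k : Fin d → ℤ) : Prop :=
  ∃ u : Fin d → ℝ, (∀ i, u i ∈ Icc (0 : ℝ) 1) ∧ latPt d A ε rv k u ∈ FaceSet d ℓ w Ws

/-- `E(U_ε, y)`: sum of the cell energies over the inner cells plus one half of the sum over
the boundary cells. -/
def EnergyMeso (d : ℕ) [NeZero d] (A : Matrix (Fin d) (Fin d) ℝ) (Wcell : CellMat d → ℝ)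
    (ε : ℝ) (rv : Fin d → ℝ) (ℓ w : ℝ) (Ws : Set (Fin (d - 1) → ℝ))
    (y : (Fin d → ℝ) → Fin d → ℝ) : ℝ :=
  ε ^ (d - 1) *
    ((∑' k : Fin d → ℤ, if InnerCellM d A ε rv ℓ w k then Wcell (dgrad d A ε rv y k) else 0) +
      (1 / 2) * ∑' k : Fin d → ℤ,
        if BoundaryCellM d A ε rv ℓ w Ws k then Wcell (dgrad d A ε rv y k) else 0)

/-- a cell is `1`-broken if `diam₁{∇̄y, 𝒵} > C*_int`. -/
def OneBroken (d : ℕ) [NeZero d] (A : Matrix (Fin d) (Fin d) ℝ) (ε : ℝ) (rv : Fin d → ℝ)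
    (Cstar : ℝ) (y : (Fin d → ℝ) → Fin d → ℝ) (k : Fin d → ℤ) : Prop :=
  ∃ b b' : Fin d → Bool,
    Cstar * ε < |y (cellCorner d A ε rv k b) 0 - y (cellCorner d A ε rv k b') 0|

/-- the (half open) cell with index `k`. -/
def cellRegion (d : ℕ) (A : Matrix (Fin d) (Fin d) ℝ) (ε : ℝ) (rv : Fin d → ℝ)
    (k : Fin d → ℤ) : Set (Fin d → ℝ) :=
  {x | ∃ u : Fin d → ℝ, (∀ i, u i ∈ Ico (0 : ℝ) 1) ∧ x = latPt d A ε rv k u}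

/-- the averaged boundary condition
`(1/(w^{d-1}|W|)) ∫_{w·W} (ỹ¹(ℓ,x') - ỹ¹(0,x')) dx' = ℓ(1+r)`. -/
def AvgBC (d : ℕ) [NeZero d] (A : Matrix (Fin d) (Fin d) ℝ) (ε : ℝ) (rv : Fin d → ℝ)
    (Cstar ℓ w : ℝ) (Ws : Set (Fin (d - 1) → ℝ)) (y : (Fin d → ℝ) → Fin d → ℝ) (r : ℝ) : Prop :=
  (∫ x' in w • Ws,
      (tildey d A ε rv Cstar y (consd d ℓ x') 0 - tildey d A ε rv Cstar y (consd d 0 x') 0)) =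
    w ^ (d - 1) * (volume Ws).toReal * (ℓ * (1 + r))

/-- no `1`-broken cell meets the boundary faces `{0,ℓ} × w·W̃`. -/
def NoBrokenFace (d : ℕ) [NeZero d] (A : Matrix (Fin d) (Fin d) ℝ) (ε : ℝ) (rv : Fin d → ℝ)
    (Cstar ℓ w : ℝ) (Wts : Set (Fin (d - 1) → ℝ)) (y : (Fin d → ℝ) → Fin d → ℝ) : Prop :=
  ∀ k : Fin d → ℤ, OneBroken d A ε rv Cstar y k →
    cellRegion d A ε rv k ∩ FaceSet d ℓ w Wts = ∅

/-- the mesoscopic minimization problem `M(U_ε, r)`. -/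
def Mmeso (d : ℕ) [NeZero d] (A : Matrix (Fin d) (Fin d) ℝ) (Wcell : CellMat d → ℝ)
    (ε : ℝ) (rv : Fin d → ℝ) (Cstar ℓ w : ℝ) (Wts Ws : Set (Fin (d - 1) → ℝ)) (r : ℝ) : ℝ :=
  sInf {e | ∃ y : (Fin d → ℝ) → Fin d → ℝ,
    AvgBC d A ε rv Cstar ℓ w Ws y r ∧ NoBrokenFace d A ε rv Cstar ℓ w Wts y ∧
    e = EnergyMeso d A Wcell ε rv ℓ w Ws y}

def einfDist {n : ℕ} (x : Fin n → ℝ) (S : Set (Fin n → ℝ)) : ℝ :=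
  sInf {t | ∃ z ∈ S, t = eunorm fun i => x i - z i}

/-- the condition (W form): a connected subset of `(0,1)^{d-1}` of measure in `(1/2, 1]` whose
boundary has `H^{d-2}`-measure `< D`. -/
def WFormP (d : ℕ) (D : ℝ) (S : Set (Fin (d - 1) → ℝ)) : Prop :=
  (∀ x ∈ S, ∀ i, x i ∈ Ioo (0 : ℝ) 1) ∧ IsConnected S ∧
    1 / 2 < (volume S).toReal ∧ (volume S).toReal ≤ 1 ∧
    μH[(d : ℝ) - 2] (frontier S) < ENNReal.ofReal D

/-- the subset of `W̃` of points of distance `> D'ε^{1-s}` from `∂W̃`. -/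
def coreSet (d : ℕ) (D' ε : ℝ) (Wts : Set (Fin (d - 1) → ℝ)) : Set (Fin (d - 1) → ℝ) :=
  {x ∈ Wts | D' * ε ^ (1 - sExp d) < einfDist x (frontier Wts)}

/-- `W` is the connected component of largest Lebesgue measure of `coreSet`. -/
def LargestComp (d : ℕ) (D' ε : ℝ) (Wts Ws : Set (Fin (d - 1) → ℝ)) : Prop :=
  ∃ x₀ ∈ coreSet d D' ε Wts, Ws = connectedComponentIn (coreSet d D' ε Wts) x₀ ∧
    ∀ x ∈ coreSet d D' ε Wts, volume (connectedComponentIn (coreSet d D' ε Wts) x) ≤ volume Ws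

/-- the admissible pairs `(W̃, W)`. -/
def AdmissiblePair (d : ℕ) (D D' ε : ℝ) (Wts Ws : Set (Fin (d - 1) → ℝ)) : Prop :=
  WFormP d D Wts ∧ LargestComp d D' ε Wts Ws ∧ WFormP d D Ws

/-! the macroscopic body `Ω = (0,l₁) × … × (0,l_d)`. -/

def OmegaBox (d : ℕ) (l : Fin d → ℝ) : Set (Fin d → ℝ) := {x | ∀ i, x i ∈ Ioo 0 (l i)}

def InnerCellOmega (d : ℕ) (A : Matrix (Fin d) (Fin d) ℝ) (ε : ℝ) (l : Fin d → ℝ)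
    (k : Fin d → ℤ) : Prop :=
  ∀ u : Fin d → ℝ, (∀ i, u i ∈ Icc (0 : ℝ) 1) → latPt d A ε 0 k u ∈ OmegaBox d l

/-- the rescaled energy `𝓔_ε(y) = ε^{d-1} Σ_{inner cells} W_cell(∇̄y)`. -/
def EnergyOmega (d : ℕ) (A : Matrix (Fin d) (Fin d) ℝ) (Wcell : CellMat d → ℝ) (ε : ℝ)
    (l : Fin d → ℝ) (y : (Fin d → ℝ) → Fin d → ℝ) : ℝ :=
  ε ^ (d - 1) * ∑' k : Fin d → ℤ,
    if InnerCellOmega d A ε l k then Wcell (dgrad d A ε 0 y k) else 0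

/-- `l_A = Σ_j |v_j · e₁|`. -/
def lA (d : ℕ) [NeZero d] (A : Matrix (Fin d) (Fin d) ℝ) : ℝ := ∑ j, |A 0 j|

/-- the boundary condition of the class `𝒜(a_ε)`:
`y¹(x) = (1+a)x₁` for lattice points `x ∈ Ω` with `x₁ ≤ 2l_Aε` or `x₁ ≥ l₁ - 2l_Aε`. -/
def BdryCondA (d : ℕ) [NeZero d] (A : Matrix (Fin d) (Fin d) ℝ) (ε : ℝ) (l : Fin d → ℝ)
    (a : ℝ) (y : (Fin d → ℝ) → Fin d → ℝ) : Prop :=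
  ∀ k : Fin d → ℤ, latPt d A ε 0 k 0 ∈ OmegaBox d l →
    ((latPt d A ε 0 k 0) 0 ≤ 2 * lA d A * ε ∨ l 0 - 2 * lA d A * ε ≤ (latPt d A ε 0 k 0) 0) →
    y (latPt d A ε 0 k 0) 0 = (1 + a) * (latPt d A ε 0 k 0) 0

/-- `inf {𝓔_ε(y) : y ∈ 𝒜(a_ε)}`. -/
def minEnergy (d : ℕ) [NeZero d] (A : Matrix (Fin d) (Fin d) ℝ) (Wcell : CellMat d → ℝ)
    (ε : ℝ) (l : Fin d → ℝ) (a : ℝ) : ℝ :=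
  sInf {e | ∃ y : (Fin d → ℝ) → Fin d → ℝ,
    BdryCondA d A ε l a y ∧ e = EnergyOmega d A Wcell ε l y}

/-! helpers for the interpolation lemmas. -/

/-- the simplicial interpolation on the single cell with index `k`. -/
def cellInterp (d : ℕ) (A : Matrix (Fin d) (Fin d) ℝ) (ε : ℝ) (rv : Fin d → ℝ)
    (y : (Fin d → ℝ) → Fin d → ℝ) (k : Fin d → ℤ) (x : Fin d → ℝ) : Fin d → ℝ :=
  fun j => cubeInterp d (fun b => y (cellCorner d A ε rv k b) j)
    (fun i => (ε • A)⁻¹.mulVec x i - rv i - (k i : ℝ))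

/-- the gradient of a map `ℝ^d → ℝ^d` as a `d×d` array. -/
def gradM (d : ℕ) (f : (Fin d → ℝ) → Fin d → ℝ) (x : Fin d → ℝ) : Fin d → Fin d → ℝ :=
  fun j i => fderiv ℝ f x (Pi.single i 1) j

def sqnorm (d : ℕ) (F : Fin d → Fin d → ℝ) : ℝ := Real.sqrt (∑ j, ∑ i, F j i ^ 2)

/-- Euclidean distance of a `d×d` matrix to `SO(d)`. -/
def distSO (d : ℕ) (F : Fin d → Fin d → ℝ) : ℝ :=
  sInf {t | ∃ R : Matrix (Fin d) (Fin d) ℝ, IsSO R ∧ t = sqnorm d fun j i => F j i - R j i}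

/-- `∇̄y` as a (piecewise constant) function on `ℝ^d`. -/
def dgradFun (d : ℕ) (A : Matrix (Fin d) (Fin d) ℝ) (ε : ℝ) (rv : Fin d → ℝ)
    (y : (Fin d → ℝ) → Fin d → ℝ) (x : Fin d → ℝ) : CellMat d :=
  dgrad d A ε rv y (cellIndex d A ε rv x)

/-- the directional interpolation `ȳ_ν` on the cells `ε D^ν(λ + [0,1)^d)`. -/
def barInterp (d : ℕ) [NeZero d] (ε Cint : ℝ) (Dν : Matrix (Fin d) (Fin d) ℝ) (ν : Fin d → ℝ)
    (y : (Fin d → ℝ) → Fin d → ℝ) (x : Fin d → ℝ) : Fin d → ℝ :=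
  let u := (ε • Dν)⁻¹.mulVec x
  let x0 := ε • Dν.mulVec fun i => (⌊u i⌋ : ℝ)
  let x1 := fun i => x0 i + ε * ν i
  if eunorm (fun j => y x1 j - y x0 j) ≤ Cint * ε then
    fun j => (1 - (u 0 - (⌊u 0⌋ : ℝ))) * y x0 j + (u 0 - (⌊u 0⌋ : ℝ)) * y x1 j
  else y x0

end Cleavage

namespace Cleavage

/-- lattice point with integer index `m`. -/
def ptZ (d : ℕ) (A : Matrix (Fin d) (Fin d) ℝ) (ε : ℝ) (m : Fin d → ℤ) : Fin d → ℝ :=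
  ε • A.mulVec fun i => (m i : ℝ)

theorem cellCorner_eq_ptZ (d : ℕ) (A : Matrix (Fin d) (Fin d) ℝ) (ε : ℝ) (k : Fin d → ℤ)
    (b : Fin d → Bool) :
    cellCorner d A ε 0 k b = ptZ d A ε (fun i => k i + if b i then 1 else 0) := by
  unfold cellCorner latPt ptZ
  congr 2
  funext i
  by_cases h : b i <;> simp [h]

theorem abs_le_eunorm {n : ℕ} (v : Fin n → ℝ) (j : Fin n) : |v j| ≤ eunorm v := by
  unfold eunorm
  rw [← Real.sqrt_sq_eq_abs]
  apply Real.sqrt_le_sqrt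
  exact Finset.single_le_sum (f := fun i => v i ^ 2) (fun i _ => sq_nonneg _) (Finset.mem_univ j)

theorem cubeInterp_mem (n : ℕ) : ∀ (f : (Fin n → Bool) → ℝ) (x : Fin n → ℝ) (a b : ℝ),
    (∀ i, |x i - 1 / 2| ≤ 1 / 2) → (∀ s, f s ∈ Icc a b) → cubeInterp n f x ∈ Icc a b := by
  induction n with
  | zero => intro f x a b _ hf; exact hf _
  | succ n ih =>
    intro f x a b hx hf
    have hc : (∑ b : Fin (n + 1) → Bool, f b) / 2 ^ (n + 1) ∈ Icc a b := by
      have h1 : ∑ s : Fin (n + 1) → Bool, f s ≤ ∑ s : Fin (n + 1) → Bool, b :=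
        Finset.sum_le_sum fun s _ => (hf s).2
      have h2 : ∑ s : Fin (n + 1) → Bool, a ≤ ∑ s : Fin (n + 1) → Bool, f s :=
        Finset.sum_le_sum fun s _ => (hf s).1
      simp at h1 h2
      constructor
      · rw [le_div_iff₀ (by positivity)]; linarith
      · rw [div_le_iff₀ (by positivity)]; linarith
    rw [cubeInterp]
    have h : ∃ i : Fin (n + 1), ∀ j : Fin (n + 1), |x j - 1 / 2| ≤ |x i - 1 / 2| :=
      Finite.exists_max fun i => |x i - 1 / 2|
    have hi0 := Classical.choose_spec h
    set i0 := Classical.choose h with hi0def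
    split_ifs with ht
    · exact hc
    all_goals
      have htpos : 0 < 2 * |x i0 - 1 / 2| := lt_of_le_of_ne (by positivity) (Ne.symm ht)
      refine (convex_Icc a b) hc (ih _ _ a b ?_ fun s => hf _) ?_ htpos.le (by ring)
      · intro j
        have := hi0 (i0.succAbove j)
        rw [add_sub_cancel_left, abs_div, abs_of_pos htpos, div_le_iff₀ htpos]
        linarith
      · have := hx i0
        linarith

/-- Chain of diagonal steps inside intact cells. -/
theorem chain_bound (d : ℕ) (A : Matrix (Fin d) (Fin d) ℝ) (ε Cint : ℝ)
    (y : (Fin d → ℝ) → Fin d → ℝ) (k : Fin d → ℤ) (N : ℕ)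
    (hgood : ∀ k' : Fin d → ℤ, (∀ i, |k' i - k i| ≤ N) → IntactCell d A ε 0 Cint y k') :
    ∀ n : ℕ, n ≤ N → ∀ m : Fin d → ℤ, (∀ i, |m i - k i| ≤ n) →
      ∀ j, |y (ptZ d A ε m) j - y (ptZ d A ε k) j| ≤ n * (Cint * ε) := by
  intro n
  induction n with
  | zero =>
    intro _ m hm j
    have : m = k := by
      funext i; have := hm i; simp at this; omega
    simp [this]
  | succ n ih =>
    intro hn m hm j
    let m' : Fin d → ℤ := fun i => if m i < k i then m i + 1 else if k i < m i then m i - 1 else m i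
    let q : Fin d → ℤ := fun i => min (m i) (m' i)
    have hm' : ∀ i, |m' i - k i| ≤ n := by
      intro i
      have := hm i
      push_cast at this
      simp only [m']
      rw [abs_le] at *
      split_ifs <;> omega
    have hq : ∀ i, |q i - k i| ≤ N := by
      intro i
      have := hm i
      push_cast at this
      simp only [q, m']
      rw [abs_le] at *
      split_ifs <;> omega
    have h1 := hgood q hq (fun i => decide (q i < m i)) (fun i => decide (q i < m' i))
    rw [cellCorner_eq_ptZ, cellCorner_eq_ptZ] at h1
    have e1 : (fun i => q i + if decide (q i < m i) = true then 1 else 0) = m := by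
      funext i
      simp only [q, m', decide_eq_true_eq]
      split_ifs <;> omega
    have e2 : (fun i => q i + if decide (q i < m' i) = true then 1 else 0) = m' := by
      funext i
      simp only [q, m', decide_eq_true_eq]
      split_ifs <;> omega
    rw [e1, e2] at h1
    have h2 := (abs_le_eunorm _ j).trans h1
    have h3 := ih (by omega) m' hm' j
    push_cast
    have := abs_sub_le (y (ptZ d A ε m) j) (y (ptZ d A ε m') j) (y (ptZ d A ε k) j)
    linarith

/-- Coordinates of the directional cell in lattice coordinates. -/
theorem exists_T (d : ℕ) [NeZero d] (A Dν : Matrix (Fin d) (Fin d) ℝ) (ν : Fin d → ℝ)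
    (hν : ν ∈ Vfin d A) (h0 : ∀ i, Dν i 0 = ν i)
    (h1 : ∀ j : Fin d, j ≠ 0 → ∃ jA : Fin d, ∀ i, Dν i j = A i jA) :
    ∃ T : Matrix (Fin d) (Fin d) ℤ, (∀ i j, |T i j| ≤ 1) ∧
      Dν = A * T.map (fun z : ℤ => (z : ℝ)) ∧ ν = A.mulVec (fun i => (T i 0 : ℝ)) := by
  have key : ∀ j, ∃ c : Fin d → ℤ, (∀ i, |c i| ≤ 1) ∧
      ∀ i, Dν i j = A.mulVec (fun l => (c l : ℝ)) i := by
    intro j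
    by_cases hj : j = 0
    · subst hj
      simp only [Vfin, Finset.mem_erase, Finset.mem_image] at hν
      obtain ⟨_, t, _, ht⟩ := hν
      refine ⟨fun i => ((t i : ℕ) : ℤ) - 1, ?_, ?_⟩
      · intro i
        have := (t i).isLt
        simp only [abs_le]; omega
      · intro i
        rw [h0, ← ht]
        simp
    · obtain ⟨jA, hjA⟩ := h1 j hj
      refine ⟨Pi.single jA 1, ?_, ?_⟩
      · intro i
        by_cases h : i = jA
        · subst h; simp
        · simp [h]
      · intro i
        rw [hjA]
        have : (fun l => (((Pi.single jA 1 : Fin d → ℤ) l : ℤ) : ℝ)) = Pi.single jA 1 := by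
          funext l
          by_cases h : l = jA
          · subst h; simp
          · simp [h]
        rw [this]
        simp
  choose c hc1 hc2 using key
  refine ⟨Matrix.of fun i j => c j i, fun i j => hc1 j i, ?_, ?_⟩
  · ext i j
    rw [hc2]
    simp [Matrix.mul_apply, Matrix.mulVec, dotProduct]
  · funext i
    rw [← h0, hc2]
    simp

theorem pointwise_bound (d : ℕ) [NeZero d] (A Dν : Matrix (Fin d) (Fin d) ℝ) (hA : 0 < A.det)
    (ε : ℝ) (hε : 0 < ε) (Cint : ℝ) (y : (Fin d → ℝ) → Fin d → ℝ) (hCint : 1 ≤ Cint)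
    (ν : Fin d → ℝ)
    (hν : ν ∈ Vfin d A) (h0 : ∀ i, Dν i 0 = ν i)
    (h1 : ∀ j : Fin d, j ≠ 0 → ∃ jA : Fin d, ∀ i, Dν i j = A i jA) (hdet : Dν.det ≠ 0)
    (x : Fin d → ℝ)
    (hgood : ∀ k' : Fin d → ℤ, (∀ i, |k' i - cellIndex d A ε 0 x i| ≤ (d + 2 : ℕ)) →
      IntactCell d A ε 0 Cint y k') (j : Fin d) :
    |tildey d A ε 0 Cint y x j - barInterp d ε Cint Dν ν y x j| ≤ (d + 3) * (Cint * ε) := by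
  obtain ⟨T, hT1, hT2, hT3⟩ := exists_T d A Dν ν hν h0 h1
  have hchain := chain_bound d A ε Cint y (cellIndex d A ε 0 x) (d + 2) hgood (d + 2) le_rfl
  set k := cellIndex d A ε 0 x with hk
  have hCε : 0 ≤ Cint * ε := by positivity
  have hkI : IntactCell d A ε 0 Cint y k := hgood k (by intro i; simp; positivity)
  -- the simplicial interpolation
  have ht : |tildey d A ε 0 Cint y x j - y (ptZ d A ε k) j| ≤ Cint * ε := by
    have : tildey d A ε 0 Cint y x j =
        cubeInterp d (fun b => y (cellCorner d A ε 0 k b) j) (refCoord d A ε 0 x) := by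
      unfold tildey
      simp only
      rw [if_pos hkI]
    rw [this]
    have hm := cubeInterp_mem d (fun b => y (cellCorner d A ε 0 k b) j) (refCoord d A ε 0 x)
      (y (ptZ d A ε k) j - Cint * ε) (y (ptZ d A ε k) j + Cint * ε) ?_ ?_
    · rw [abs_le]; constructor <;> linarith [hm.1, hm.2]
    · intro i
      have a1 := Int.floor_le ((ε • A)⁻¹.mulVec x i - (0 : Fin d → ℝ) i)
      have a2 := Int.lt_floor_add_one ((ε • A)⁻¹.mulVec x i - (0 : Fin d → ℝ) i)
      simp only [refCoord, cellIndex]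
      rw [abs_le]
      constructor <;> linarith
    · intro s
      have h2 := (abs_le_eunorm _ j).trans (hkI s (fun _ => false))
      have e : cellCorner d A ε 0 k (fun _ => false) = ptZ d A ε k := by
        rw [cellCorner_eq_ptZ]; simp
      rw [e, abs_le] at h2
      constructor <;> linarith [h2.1, h2.2]
  -- the directional interpolation
  set u := (ε • Dν)⁻¹.mulVec x with hu
  let m0 : Fin d → ℤ := T.mulVec (fun i => ⌊u i⌋)
  let m1 : Fin d → ℤ := fun i => m0 i + T i 0
  have ex0 : ε • Dν.mulVec (fun i => (⌊u i⌋ : ℝ)) = ptZ d A ε m0 := by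
    unfold ptZ
    rw [hT2, ← Matrix.mulVec_mulVec]
    congr 2
    funext i
    simp [m0, Matrix.mulVec, dotProduct]
  have ex1 : (fun i => (ε • Dν.mulVec (fun i => (⌊u i⌋ : ℝ))) i + ε * ν i) = ptZ d A ε m1 := by
    rw [ex0]
    unfold ptZ
    funext i
    have : (fun i => ((m1 i : ℤ) : ℝ)) = (fun i => (m0 i : ℝ)) + (fun i => (T i 0 : ℝ)) := by
      funext i; simp [m1]
    rw [this, Matrix.mulVec_add, ← hT3]
    simp [mul_add]
  have hdε : IsUnit (ε • Dν).det := by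
    rw [Matrix.det_smul]; exact (mul_ne_zero (pow_ne_zero _ hε.ne') hdet).isUnit
  have hAε : IsUnit (ε • A).det := by
    rw [Matrix.det_smul]; exact (mul_ne_zero (pow_ne_zero _ hε.ne') hA.ne').isUnit
  have hxu : (ε • A)⁻¹.mulVec x = (T.map (fun z : ℤ => (z : ℝ))).mulVec u := by
    have hx : x = (ε • Dν).mulVec u := by
      rw [hu, Matrix.mulVec_mulVec, Matrix.mul_nonsing_inv _ hdε, Matrix.one_mulVec]
    have e : ε • Dν = (ε • A) * T.map (fun z : ℤ => (z : ℝ)) := by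
      rw [hT2, Matrix.smul_mul]
    conv_lhs => rw [hx, e, ← Matrix.mulVec_mulVec, Matrix.mulVec_mulVec,
      Matrix.nonsing_inv_mul _ hAε, Matrix.one_mulVec]
  have hm0 : ∀ i, |m0 i - k i| ≤ (d + 1 : ℕ) := by
    intro i
    have a1 := Int.floor_le ((ε • A)⁻¹.mulVec x i - (0 : Fin d → ℝ) i)
    have a2 := Int.lt_floor_add_one ((ε • A)⁻¹.mulVec x i - (0 : Fin d → ℝ) i)
    have hki : k i = ⌊(ε • A)⁻¹.mulVec x i - (0 : Fin d → ℝ) i⌋ := rfl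
    rw [← hki] at a1 a2
    rw [hxu] at a1 a2
    simp only [Pi.zero_apply, sub_zero] at a1 a2
    have hb : |(m0 i : ℝ) - (T.map (fun z : ℤ => (z : ℝ))).mulVec u i| ≤ d := by
      have : (m0 i : ℝ) - (T.map (fun z : ℤ => (z : ℝ))).mulVec u i =
          ∑ l, (T i l : ℝ) * ((⌊u l⌋ : ℝ) - u l) := by
        simp [m0, Matrix.mulVec, dotProduct, mul_sub, Finset.sum_sub_distrib]
      rw [this]
      refine (Finset.abs_sum_le_sum_abs _ _).trans ?_
      calc _ ≤ ∑ l : Fin d, (1 : ℝ) := by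
            apply Finset.sum_le_sum
            intro l _
            rw [abs_mul]
            have b1 : |(T i l : ℝ)| ≤ 1 := by exact_mod_cast hT1 i l
            have b2 : |(⌊u l⌋ : ℝ) - u l| ≤ 1 := by
              rw [abs_le]
              constructor <;> linarith [Int.floor_le (u l), Int.lt_floor_add_one (u l)]
            exact mul_le_one₀ b1 (abs_nonneg _) b2
        _ = d := by simp
    have : |((m0 i - k i : ℤ) : ℝ)| ≤ ((d + 1 : ℕ) : ℝ) := by
      push_cast
      rw [abs_le] at *
      constructor <;> linarith [hb.1, hb.2]
    exact_mod_cast this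
  have hm1 : ∀ i, |m1 i - k i| ≤ (d + 2 : ℕ) := by
    intro i
    have b1 := hm0 i
    have b2 := hT1 i 0
    simp only [m1]
    rw [abs_le] at *
    push_cast at *
    omega
  have c0 := hchain m0 (fun i => (hm0 i).trans (by push_cast; linarith)) j
  have c1 := hchain m1 hm1 j
  have hbar : |barInterp d ε Cint Dν ν y x j - y (ptZ d A ε k) j| ≤ (d + 2 : ℕ) * (Cint * ε) := by
    unfold barInterp
    rw [← hu, ex1, ex0]
    split_ifs with hif
    · have s0 := Int.floor_le (u 0)
      have s1 := Int.lt_floor_add_one (u 0)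
      set s := u 0 - (⌊u 0⌋ : ℝ) with hs
      have hc := (convex_Icc (y (ptZ d A ε k) j - (d + 2 : ℕ) * (Cint * ε))
        (y (ptZ d A ε k) j + (d + 2 : ℕ) * (Cint * ε)))
        (x := y (ptZ d A ε m0) j) (y := y (ptZ d A ε m1) j)
        (by rw [abs_le] at c0; constructor <;> linarith [c0.1, c0.2])
        (by rw [abs_le] at c1; constructor <;> linarith [c1.1, c1.2])
        (show 0 ≤ 1 - s by linarith) (show 0 ≤ s by linarith) (by ring)
      simp only [smul_eq_mul] at hc
      rw [abs_le]; constructor <;> linarith [hc.1, hc.2]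
    · exact c0
  have := abs_sub_le (tildey d A ε 0 Cint y x j) (y (ptZ d A ε k) j)
    (barInterp d ε Cint Dν ν y x j)
  rw [abs_sub_comm (y (ptZ d A ε k) j)] at this
  push_cast at hbar
  linarith

theorem finite_inner (d : ℕ) (A : Matrix (Fin d) (Fin d) ℝ) (hA : 0 < A.det)
    (ε : ℝ) (hε : 0 < ε) (U : Set (Fin d → ℝ)) (hUb : Bornology.IsBounded U) :
    {k : Fin d → ℤ | ptZ d A ε k ∈ U}.Finite := by
  have hAε : IsUnit (ε • A).det := by
    rw [Matrix.det_smul]; exact (mul_ne_zero (pow_ne_zero _ hε.ne') hA.ne').isUnit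
  let L : (Fin d → ℝ) →L[ℝ] (Fin d → ℝ) := LinearMap.toContinuousLinearMap (ε • A)⁻¹.mulVecLin
  obtain ⟨r, hr⟩ := hUb.exists_norm_le
  refine (Set.finite_Icc (fun _ : Fin d => -⌈‖L‖ * r⌉) (fun _ : Fin d => ⌈‖L‖ * r⌉)).subset ?_
  intro k hk
  have hk : ptZ d A ε k ∈ U := hk
  have e : L (ptZ d A ε k) = fun i => (k i : ℝ) := by
    change (ε • A)⁻¹.mulVec (ε • A.mulVec fun i => (k i : ℝ)) = _
    rw [← Matrix.smul_mulVec, Matrix.mulVec_mulVec, Matrix.nonsing_inv_mul _ hAε,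
      Matrix.one_mulVec]
  have b : ‖(fun i => (k i : ℝ))‖ ≤ ‖L‖ * r := by
    rw [← e]
    exact (L.le_opNorm _).trans (mul_le_mul_of_nonneg_left (hr _ hk) (norm_nonneg _))
  have bi : ∀ i, |(k i : ℝ)| ≤ ⌈‖L‖ * r⌉ := fun i =>
    ((norm_le_pi_norm (fun i => (k i : ℝ)) i).trans b).trans (Int.le_ceil _)
  constructor <;> intro i <;> have := bi i <;> rw [abs_le] at this
  · exact_mod_cast this.1
  · exact_mod_cast this.2

/-- volume of the union of the cells around a given one. -/
theorem volume_near (d : ℕ) (A : Matrix (Fin d) (Fin d) ℝ) (hA : 0 < A.det)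
    (ε : ℝ) (hε : 0 < ε) (N : ℕ) (k' : Fin d → ℤ) :
    volume {x : Fin d → ℝ | ∀ i, |k' i - cellIndex d A ε 0 x i| ≤ N} ≤
      ENNReal.ofReal (ε ^ d * A.det * (2 * N + 1) ^ d) := by
  have hdet : (ε • A).det = ε ^ d * A.det := by rw [Matrix.det_smul]; simp
  have hpos : 0 < (ε • A).det := by rw [hdet]; positivity
  have hsub : {x : Fin d → ℝ | ∀ i, |k' i - cellIndex d A ε 0 x i| ≤ N} ⊆
      (Matrix.toLin' (ε • A)) '' (Set.Icc (fun i => (k' i : ℝ) - N) (fun i => (k' i : ℝ) + N + 1)) := by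
    intro x hx
    refine ⟨(ε • A)⁻¹.mulVec x, ?_, ?_⟩
    · have key : ∀ i, (k' i : ℝ) - N ≤ (ε • A)⁻¹.mulVec x i ∧
          (ε • A)⁻¹.mulVec x i ≤ (k' i : ℝ) + N + 1 := by
        intro i
        have h := hx i
        have a1 := Int.floor_le ((ε • A)⁻¹.mulVec x i - (0 : Fin d → ℝ) i)
        have a2 := Int.lt_floor_add_one ((ε • A)⁻¹.mulVec x i - (0 : Fin d → ℝ) i)
        have hki : cellIndex d A ε 0 x i = ⌊(ε • A)⁻¹.mulVec x i - (0 : Fin d → ℝ) i⌋ := rfl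
        rw [← hki] at a1 a2
        simp only [Pi.zero_apply, sub_zero] at a1 a2
        have h' : |(k' i : ℝ) - (cellIndex d A ε 0 x i : ℝ)| ≤ N := by exact_mod_cast h
        rw [abs_le] at h'
        constructor <;> linarith [h'.1, h'.2]
      exact ⟨fun i => (key i).1, fun i => (key i).2⟩
    · rw [Matrix.toLin'_apply, Matrix.mulVec_mulVec, Matrix.mul_nonsing_inv _ hpos.ne'.isUnit,
        Matrix.one_mulVec]
  refine (measure_mono hsub).trans ?_
  rw [Measure.addHaar_image_linearMap, LinearMap.det_toLin', Real.volume_Icc_pi, abs_of_pos hpos,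
    hdet]
  have : ∀ i : Fin d, (k' i : ℝ) + N + 1 - ((k' i : ℝ) - N) = 2 * N + 1 := fun i => by ring
  simp only [this, Finset.prod_const, Finset.card_univ, Fintype.card_fin]
  rw [← ENNReal.ofReal_pow (by positivity), ← ENNReal.ofReal_mul (by positivity)]

theorem near_boundary (d : ℕ) (A : Matrix (Fin d) (Fin d) ℝ) (hA : 0 < A.det) (N : ℕ)
    (ε : ℝ) (hε : 0 < ε) (U : Set (Fin d → ℝ)) (x : Fin d → ℝ) (k' : Fin d → ℤ)
    (hk : ∀ i, |k' i - cellIndex d A ε 0 x i| ≤ N) (u : Fin d → ℝ) (hu : ∀ i, u i ∈ Icc (0 : ℝ) 1)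
    (hout : latPt d A ε 0 k' u ∉ U) :
    x ∈ Metric.cthickening
      ((‖LinearMap.toContinuousLinearMap A.mulVecLin‖ * (N + 1)) * ε) Uᶜ := by
  have hAε : IsUnit (ε • A).det := by
    rw [Matrix.det_smul]; exact (mul_ne_zero (pow_ne_zero _ hε.ne') hA.ne').isUnit
  set L := LinearMap.toContinuousLinearMap A.mulVecLin with hL
  refine Metric.mem_cthickening_of_dist_le x (latPt d A ε 0 k' u) _ _ hout ?_
  set w := (ε • A)⁻¹.mulVec x with hw
  have hx : x = ε • A.mulVec w := by
    rw [← Matrix.smul_mulVec, hw, Matrix.mulVec_mulVec, Matrix.mul_nonsing_inv _ hAε,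
      Matrix.one_mulVec]
  have e : x - latPt d A ε 0 k' u = ε • L (w - fun i => (k' i : ℝ) + u i) := by
    rw [map_sub, smul_sub]
    conv_lhs => rw [hx]
    unfold latPt
    simp [L]
  rw [dist_eq_norm, e, norm_smul, Real.norm_of_nonneg hε.le, mul_comm]
  refine mul_le_mul_of_nonneg_right ((L.le_opNorm _).trans
    (mul_le_mul_of_nonneg_left ?_ (norm_nonneg _))) hε.le
  rw [pi_norm_le_iff_of_nonneg (by positivity)]
  intro i
  have h := hk i
  have a1 := Int.floor_le ((ε • A)⁻¹.mulVec x i - (0 : Fin d → ℝ) i)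
  have a2 := Int.lt_floor_add_one ((ε • A)⁻¹.mulVec x i - (0 : Fin d → ℝ) i)
  have hki : cellIndex d A ε 0 x i = ⌊(ε • A)⁻¹.mulVec x i - (0 : Fin d → ℝ) i⌋ := rfl
  rw [← hki, ← hw] at a1 a2
  simp only [Pi.zero_apply, sub_zero] at a1 a2
  have h' : |(k' i : ℝ) - (cellIndex d A ε 0 x i : ℝ)| ≤ N := by exact_mod_cast h
  rw [abs_le] at h'
  have u0 := (hu i).1
  have u1 := (hu i).2
  rw [Real.norm_eq_abs, abs_le, Pi.sub_apply]
  constructor <;> linarith [h'.1, h'.2]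


/-- The simplicial interpolation `ỹ_k` and the directional interpolation
`ȳ_{ν,k}` have the same limit: if the number of broken cells is at most `C ε_k^{-d+1}`, then
`ỹ_k - ȳ_{ν,k} → 0` in measure for every interaction direction `ν ∈ 𝒱`. -/
theorem interpolations_have_same_limit
    (d : ℕ) [NeZero d] (hd : 2 ≤ d) (A : Matrix (Fin d) (Fin d) ℝ) (hA : 0 < A.det)
    (U : Set (Fin d → ℝ)) (hU : IsOpen U) (hUb : Bornology.IsBounded U)
    (εs : ℕ → ℝ) (hεpos : ∀ n, 0 < εs n) (hεlim : Tendsto εs atTop (nhds 0))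
    (Cint : ℝ) (hCint : 1 ≤ Cint)
    (ys : ℕ → (Fin d → ℝ) → Fin d → ℝ)
    (Cb : ℝ)
    -- `# C̄'_{ε_k} ≤ C ε_k^{-d+1}`
    (hcount : ∀ n,
      (({k : Fin d → ℤ |
          (∀ u : Fin d → ℝ, (∀ i, u i ∈ Icc (0 : ℝ) 1) → latPt d A (εs n) 0 k u ∈ U) ∧
          ¬ IntactCell d A (εs n) 0 Cint (ys n) k}).ncard : ℝ) ≤ Cb * εs n ^ ((1 : ℝ) - d)) :
    ∀ ν ∈ Vfin d A, ∀ Dν : Matrix (Fin d) (Fin d) ℝ,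
      (∀ i, Dν i 0 = ν i) →
      (∀ j : Fin d, j ≠ 0 → ∃ jA : Fin d, ∀ i, Dν i j = A i jA) →
      Dν.det ≠ 0 →
      TendstoInMeasure (volume.restrict U)
        (fun n x => (fun j =>
          tildey d A (εs n) 0 Cint (ys n) x j - barInterp d (εs n) Cint Dν ν (ys n) x j))
        atTop (fun _ => 0) := by
  intro ν hν Dν h0 h1 hdet
  set R : ℝ := ‖LinearMap.toContinuousLinearMap A.mulVecLin‖ * ((d + 2 : ℕ) + 1) with hR
  set K : ℝ := A.det * (2 * (d + 2 : ℕ) + 1) ^ d with hK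
  have hKpos : 0 ≤ K := by positivity
  set B : ℕ → Set (Fin d → ℤ) := fun n => {k : Fin d → ℤ |
          (∀ u : Fin d → ℝ, (∀ i, u i ∈ Icc (0 : ℝ) 1) → latPt d A (εs n) 0 k u ∈ U) ∧
          ¬ IntactCell d A (εs n) 0 Cint (ys n) k} with hB
  have hBfin : ∀ n, (B n).Finite := by
    intro n
    refine (finite_inner d A hA (εs n) (hεpos n) U hUb).subset ?_
    intro k hk
    have := hk.1 0 (by intro i; simp)
    simpa [latPt, ptZ] using this
  intro δ hδ
  -- the two bad sets
  have lim1 : Tendsto (fun n => (volume.restrict U) (Metric.cthickening (R * εs n) Uᶜ))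
      atTop (nhds 0) := by
    have hfin : IsFiniteMeasure (volume.restrict U) := ⟨by
      rw [Measure.restrict_apply_univ]; exact hUb.measure_lt_top⟩
    have h := tendsto_measure_cthickening_of_isClosed (μ := volume.restrict U) (s := Uᶜ)
      ⟨1, one_pos, measure_ne_top _ _⟩ hU.isClosed_compl
    have hz : (volume.restrict U) Uᶜ = 0 := by
      rw [Measure.restrict_apply hU.measurableSet.compl]; simp
    rw [hz] at h
    refine h.comp ?_
    simpa using hεlim.const_mul R
  have lim2 : Tendsto (fun n => ENNReal.ofReal (Cb * K * εs n)) atTop (nhds 0) := by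
    have : Tendsto (fun n => Cb * K * εs n) atTop (nhds 0) := by
      simpa using hεlim.const_mul (Cb * K)
    simpa using ENNReal.tendsto_ofReal this
  have lim := lim1.add lim2
  rw [add_zero] at lim
  have hev : ∀ᶠ n in atTop, ENNReal.ofReal ((d + 3) * (Cint * εs n)) < δ := by
    have : Tendsto (fun n => (d + 3) * (Cint * εs n)) atTop (nhds 0) := by
      simpa using (hεlim.const_mul Cint).const_mul ((d : ℝ) + 3)
    have := ENNReal.tendsto_ofReal this
    rw [ENNReal.ofReal_zero] at this
    exact this.eventually (gt_mem_nhds hδ)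
  refine tendsto_of_tendsto_of_tendsto_of_le_of_le' tendsto_const_nhds lim
    (Eventually.of_forall fun n => zero_le) ?_
  filter_upwards [hev] with n hn
  have hε := hεpos n
  have hsub : {x | δ ≤ edist (fun j => tildey d A (εs n) 0 Cint (ys n) x j -
      barInterp d (εs n) Cint Dν ν (ys n) x j) (0 : Fin d → ℝ)} ⊆
      Metric.cthickening (R * εs n) Uᶜ ∪
      ⋃ k' ∈ B n, {x : Fin d → ℝ | ∀ i, |k' i - cellIndex d A (εs n) 0 x i| ≤ (d + 2 : ℕ)} := by
    intro x hx
    by_contra hcon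
    rw [mem_union, not_or] at hcon
    obtain ⟨hc1, hc2⟩ := hcon
    have hgood : ∀ k' : Fin d → ℤ, (∀ i, |k' i - cellIndex d A (εs n) 0 x i| ≤ (d + 2 : ℕ)) →
        IntactCell d A (εs n) 0 Cint (ys n) k' := by
      intro k' hk'
      by_contra hbroken
      by_cases hin : ∀ u : Fin d → ℝ, (∀ i, u i ∈ Icc (0 : ℝ) 1) → latPt d A (εs n) 0 k' u ∈ U
      · exact hc2 (mem_biUnion (show k' ∈ B n from ⟨hin, hbroken⟩) hk')
      · push Not at hin
        obtain ⟨u, hu, hout⟩ := hin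
        exact hc1 (near_boundary d A hA (d + 2) (εs n) hε U x k' hk' u hu hout)
    have hb := pointwise_bound d A Dν hA (εs n) hε Cint (ys n) hCint ν hν h0 h1 hdet x hgood
    have hx : δ ≤ edist (fun j => tildey d A (εs n) 0 Cint (ys n) x j -
      barInterp d (εs n) Cint Dν ν (ys n) x j) (0 : Fin d → ℝ) := hx
    refine absurd hx (not_le.mpr (lt_of_le_of_lt ?_ hn))
    rw [edist_dist]
    apply ENNReal.ofReal_le_ofReal
    rw [dist_zero_right, pi_norm_le_iff_of_nonneg (by positivity)]
    exact hb
  refine (measure_mono hsub).trans ((measure_union_le _ _).trans (add_le_add le_rfl ?_))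
  refine (Measure.restrict_le_self _).trans ?_
  have hb2 : (⋃ k' ∈ B n, {x : Fin d → ℝ | ∀ i, |k' i - cellIndex d A (εs n) 0 x i| ≤ (d + 2 : ℕ)}) =
      ⋃ k' ∈ (hBfin n).toFinset,
        {x : Fin d → ℝ | ∀ i, |k' i - cellIndex d A (εs n) 0 x i| ≤ (d + 2 : ℕ)} := by
    simp
  rw [hb2]
  refine (measure_biUnion_finset_le _ _).trans ?_
  refine (Finset.sum_le_sum fun k' _ =>
    volume_near d A hA (εs n) hε (d + 2) k').trans ?_
  rw [Finset.sum_const, ← Set.ncard_eq_toFinset_card _ (hBfin n), nsmul_eq_mul,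
    ← ENNReal.ofReal_natCast, ← ENNReal.ofReal_mul (Nat.cast_nonneg _)]
  apply ENNReal.ofReal_le_ofReal
  have hc := hcount n
  have hp : εs n ^ ((1 : ℝ) - d) * εs n ^ d = εs n := by
    rw [← Real.rpow_natCast, ← Real.rpow_add hε]; simp
  calc ((B n).ncard : ℝ) * (εs n ^ d * A.det * (2 * (d + 2 : ℕ) + 1) ^ d)
      ≤ (Cb * εs n ^ ((1 : ℝ) - d)) * (εs n ^ d * A.det * (2 * (d + 2 : ℕ) + 1) ^ d) :=
        mul_le_mul_of_nonneg_right hc (by positivity)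
    _ = Cb * K * (εs n ^ ((1 : ℝ) - d) * εs n ^ d) := by rw [hK]; ring
    _ = Cb * K * εs n := by rw [hp]


end Cleavage
end
end

section
/- Optimal cleavage direction for the rotated triangular lattice: let φ ∈ [0, π/3), let T_φ ∈ SO(2) be the rotation by angle φ, and set ν₁ = T_φ(1,0)ᵀ, ν₂ = T_φ(1/2, √3/2)ᵀ, ν₃ = T_φ(−1/2, √3/2)ᵀ. Then for any β̄ > 0, the minimum over unit vectors ς ∈ S¹ with e₁·ς ≠ 0 of β̄(|ν₁·ς| + |ν₂·ς| + |ν₃·ς|)/|e₁·ς| equals √3·β̄ / sin(φ + π/3), and it is attained at the unit vector orthogonal to ν₂. -/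
noncomputable section

namespace Cleavage

/-- rotation of the plane by the angle `φ`. -/
def rotM (φ : ℝ) : Matrix (Fin 2) (Fin 2) ℝ :=
  !![Real.cos φ, -Real.sin φ; Real.sin φ, Real.cos φ]

/-- the nearest-neighbour bond directions of the rotated triangular lattice. -/
def nuTri1 (φ : ℝ) : Fin 2 → ℝ := (rotM φ).mulVec ![1, 0]
def nuTri2 (φ : ℝ) : Fin 2 → ℝ := (rotM φ).mulVec ![1 / 2, Real.sqrt 3 / 2]
def nuTri3 (φ : ℝ) : Fin 2 → ℝ := (rotM φ).mulVec ![-(1 / 2), Real.sqrt 3 / 2]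

/-- the Euclidean inner product on the plane. -/
def dot2 (v w : Fin 2 → ℝ) : ℝ := v 0 * w 0 + v 1 * w 1

/-- `ς ∈ S¹`. -/
def unit2 (ς : Fin 2 → ℝ) : Prop := ς 0 ^ 2 + ς 1 ^ 2 = 1

/-- the fracture-energy quotient `β̄(|ν₁·ς| + |ν₂·ς| + |ν₃·ς|)/|e₁·ς|`. -/
def FTri (φ b : ℝ) (ς : Fin 2 → ℝ) : ℝ :=
  b * (|dot2 (nuTri1 φ) ς| + |dot2 (nuTri2 φ) ς| + |dot2 (nuTri3 φ) ς|) / |ς 0|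

theorem key (φ : ℝ) (hφ0 : 0 ≤ φ) (hφ1 : φ < Real.pi / 3) :
    0 ≤ Real.sin φ ∧ Real.sin φ ≤ Real.sin (φ + Real.pi / 3) ∧ 0 < Real.sin (φ + Real.pi / 3) ∧
    Real.sin (φ + Real.pi / 3) = Real.sin φ / 2 + Real.sqrt 3 / 2 * Real.cos φ := by
  have hpi := Real.pi_pos
  have h1 : 0 ≤ Real.sin φ := Real.sin_nonneg_of_nonneg_of_le_pi hφ0 (by linarith)
  have h2 : 0 < Real.sin (φ + Real.pi / 3) := Real.sin_pos_of_pos_of_lt_pi (by linarith) (by linarith)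
  have h3 : 0 ≤ Real.sin (Real.pi / 3 - φ) :=
    Real.sin_nonneg_of_nonneg_of_le_pi (by linarith) (by linarith)
  have h4 : Real.sin (φ + Real.pi / 3) = Real.sin φ / 2 + Real.sqrt 3 / 2 * Real.cos φ := by
    rw [Real.sin_add, Real.sin_pi_div_three, Real.cos_pi_div_three]; ring
  rw [Real.sin_sub, Real.sin_pi_div_three, Real.cos_pi_div_three] at h3
  exact ⟨h1, by linarith, h2, h4⟩

theorem dots (φ : ℝ) (ς : Fin 2 → ℝ) :
    dot2 (nuTri2 φ) ς = (Real.cos φ / 2 - Real.sqrt 3 / 2 * Real.sin φ) * ς 0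
      + (Real.sin φ / 2 + Real.sqrt 3 / 2 * Real.cos φ) * ς 1 ∧
    dot2 (nuTri3 φ) ς = dot2 (nuTri2 φ) ς - dot2 (nuTri1 φ) ς ∧
    dot2 (nuTri1 φ) ς * (Real.sin φ / 2 + Real.sqrt 3 / 2 * Real.cos φ)
      - dot2 (nuTri2 φ) ς * Real.sin φ = Real.sqrt 3 / 2 * ς 0 := by
  have h := Real.sin_sq_add_cos_sq φ
  simp only [dot2, nuTri1, nuTri2, nuTri3, rotM, Matrix.mulVec, dotProduct, Fin.sum_univ_two,
    Matrix.of_apply, Matrix.cons_val_zero, Matrix.cons_val_one]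
  refine ⟨by ring, by ring, ?_⟩
  linear_combination Real.sqrt 3 / 2 * ς 0 * h

theorem attained (φ : ℝ) (hφ0 : 0 ≤ φ) (hφ1 : φ < Real.pi / 3) (b : ℝ)
    (ς : Fin 2 → ℝ) (hu : unit2 ς) (hd : dot2 (nuTri2 φ) ς = 0) :
      ς 0 ≠ 0 ∧ FTri φ b ς = Real.sqrt 3 * b / Real.sin (φ + Real.pi / 3) := by
  obtain ⟨h1, h2, h3, h4⟩ := key φ hφ0 hφ1
  obtain ⟨d1, d2, d3⟩ := dots φ ς
  rw [← h4] at d1 d3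
  have hx : ς 0 ≠ 0 := by
    intro h0
    rw [hd, h0] at d1
    have hy : ς 1 = 0 := by
      rcases mul_eq_zero.1 (show Real.sin (φ + Real.pi / 3) * ς 1 = 0 by linarith) with h | h
      · exact absurd h h3.ne'
      · exact h
    simp [unit2, h0, hy] at hu
  refine ⟨hx, ?_⟩
  rw [hd] at d3
  unfold FTri
  rw [d2, hd]
  have e : |dot2 (nuTri1 φ) ς| * Real.sin (φ + Real.pi / 3) = Real.sqrt 3 / 2 * |ς 0| := by
    have := congrArg abs (show dot2 (nuTri1 φ) ς * Real.sin (φ + Real.pi / 3)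
      = Real.sqrt 3 / 2 * ς 0 by linarith)
    rwa [abs_mul, abs_mul, abs_of_pos h3, abs_of_nonneg (show 0 ≤ Real.sqrt 3 / 2 by positivity)] at this
  rw [div_eq_div_iff (abs_ne_zero.2 hx) h3.ne', abs_zero, zero_sub, abs_neg]
  linear_combination 2 * b * e

theorem convex_bound (a d s S : ℝ) (h1 : 0 ≤ s) (h2 : s ≤ S) :
    2 * |a * S - d * s| ≤ S * (|a| + |d| + |d - a|) := by
  have e : a * S - d * s = a * (S - s) - (d - a) * s := by ring
  have e1 : |a * S - d * s| ≤ |a| * (S - s) + |d - a| * s := by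
    rw [e]
    refine (abs_sub _ _).trans ?_
    rw [abs_mul, abs_mul, abs_of_nonneg h1, abs_of_nonneg (sub_nonneg.2 h2)]
  have t1 : |a| ≤ |d| + |d - a| := by
    have := abs_sub d (d - a)
    simpa using this
  have t2 : |d - a| ≤ |d| + |a| := abs_sub _ _
  nlinarith [mul_nonneg h1 (sub_nonneg.2 t2), mul_nonneg (sub_nonneg.2 h2) (sub_nonneg.2 t1)]

/-- Optimal cleavage direction for the rotated triangular lattice:
the minimum over unit vectors `ς` with `e₁·ς ≠ 0` of the fracture-energy quotient equals
`√3·β̄ / sin(φ + π/3)` and is attained at the unit vector orthogonal to `ν₂`. -/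
theorem optimal_cleavage_triangular_lattice
    (φ : ℝ) (hφ0 : 0 ≤ φ) (hφ1 : φ < Real.pi / 3) (b : ℝ) (hb : 0 < b) :
    IsLeast {v : ℝ | ∃ ς : Fin 2 → ℝ, unit2 ς ∧ ς 0 ≠ 0 ∧ v = FTri φ b ς}
      (Real.sqrt 3 * b / Real.sin (φ + Real.pi / 3)) ∧
    ∀ ς : Fin 2 → ℝ, unit2 ς → dot2 (nuTri2 φ) ς = 0 →
      ς 0 ≠ 0 ∧ FTri φ b ς = Real.sqrt 3 * b / Real.sin (φ + Real.pi / 3) := by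
  have hatt := attained φ hφ0 hφ1 b
  obtain ⟨h1, h2, h3, h4⟩ := key φ hφ0 hφ1
  refine ⟨⟨?_, ?_⟩, hatt⟩
  · let ς : Fin 2 → ℝ := ![Real.sin φ / 2 + Real.sqrt 3 / 2 * Real.cos φ,
      -(Real.cos φ / 2 - Real.sqrt 3 / 2 * Real.sin φ)]
    have hu : unit2 ς := by
      have h := Real.sin_sq_add_cos_sq φ
      have h' : Real.sqrt 3 ^ 2 = 3 := Real.sq_sqrt (by norm_num)
      simp only [unit2, ς, Matrix.cons_val_zero, Matrix.cons_val_one]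
      linear_combination h + (Real.sin φ ^ 2 + Real.cos φ ^ 2) / 4 * h'
    have hd : dot2 (nuTri2 φ) ς = 0 := by
      rw [(dots φ ς).1]
      simp only [ς, Matrix.cons_val_zero, Matrix.cons_val_one]
      ring
    obtain ⟨p, q⟩ := hatt ς hu hd
    exact ⟨ς, hu, p, q.symm⟩
  · rintro v ⟨ς, -, hx, rfl⟩
    obtain ⟨-, d2, d3⟩ := dots φ ς
    rw [← h4] at d3
    have hb2 := convex_bound (dot2 (nuTri1 φ) ς) (dot2 (nuTri2 φ) ς) _ _ h1 h2
    rw [d3, abs_mul, abs_of_nonneg (show 0 ≤ Real.sqrt 3 / 2 by positivity), ← d2] at hb2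
    unfold FTri
    rw [div_le_div_iff₀ h3 (abs_pos.2 hx)]
    nlinarith [mul_le_mul_of_nonneg_left hb2 hb.le]

end Cleavage
end
end
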